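/- Infinite-order vanishing in the borderline case: Let Ω ⊂ ℝⁿ be open and let f : [0,∞) → ℝ be continuous and satisfy condition (6.1) with constant M > 0 (the case γ = 3). If u ∈ C(Ω) is a bounded non-negative viscosity solution of Δ∞u = f(u) in Ω and u(z) = 0 for some z ∈ Ω, then z is a zero of infinite order: for every m > 0 there exist constants C > 0 and ρ > 0 such that u(x) ≤ C|x − z|^m for all x with |x − z| < ρ. -/

import Mathlib

open Set Metric Filter MeasureTheory

/-- The infinity Laplacian of a (C²) function `φ` at `x`:
`Δ∞φ(x) = Σ_{i,j} ∂_iφ(x) ∂_jφ(x) ∂_{ij}φ(x)`. -/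
noncomputable def infLap {n : ℕ} (φ : EuclideanSpace ℝ (Fin n) → ℝ)
    (x : EuclideanSpace ℝ (Fin n)) : ℝ :=
  ∑ i : Fin n, ∑ j : Fin n,
    fderiv ℝ φ x (EuclideanSpace.single i 1) * fderiv ℝ φ x (EuclideanSpace.single j 1) *
      fderiv ℝ (fun y => fderiv ℝ φ y (EuclideanSpace.single i 1)) x (EuclideanSpace.single j 1)

/-- `u` is a viscosity supersolution of `Δ∞u = F(x, u(x))` in `Ω`. -/
def IsViscSupersol {n : ℕ} (Ω : Set (EuclideanSpace ℝ (Fin n)))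
    (u : EuclideanSpace ℝ (Fin n) → ℝ)
    (F : EuclideanSpace ℝ (Fin n) → ℝ → ℝ) : Prop :=
  ∀ φ : EuclideanSpace ℝ (Fin n) → ℝ, ContDiff ℝ 2 φ →
    ∀ x₀ ∈ Ω, φ x₀ = u x₀ → IsLocalMin (fun x => u x - φ x) x₀ →
      infLap φ x₀ ≤ F x₀ (φ x₀)

/-- `u` is a viscosity subsolution of `Δ∞u = F(x, u(x))` in `Ω`. -/
def IsViscSubsol {n : ℕ} (Ω : Set (EuclideanSpace ℝ (Fin n)))
    (u : EuclideanSpace ℝ (Fin n) → ℝ)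
    (F : EuclideanSpace ℝ (Fin n) → ℝ → ℝ) : Prop :=
  ∀ φ : EuclideanSpace ℝ (Fin n) → ℝ, ContDiff ℝ 2 φ →
    ∀ x₀ ∈ Ω, φ x₀ = u x₀ → IsLocalMax (fun x => u x - φ x) x₀ →
      F x₀ (φ x₀) ≤ infLap φ x₀

/-- `u` is a viscosity solution of `Δ∞u = F(x, u(x))` in `Ω`. -/
def IsViscSol {n : ℕ} (Ω : Set (EuclideanSpace ℝ (Fin n)))
    (u : EuclideanSpace ℝ (Fin n) → ℝ)
    (F : EuclideanSpace ℝ (Fin n) → ℝ → ℝ) : Prop :=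
  IsViscSupersol Ω u F ∧ IsViscSubsol Ω u F

/-- Condition (6.1): for every `T > 0` there is `δ₀ > 0` such that
`0 ≤ f(δt) ≤ M δ³ f(t)` for all `0 < t ≤ T` and `0 < δ ≤ δ₀`. -/
def Cond61 (f : ℝ → ℝ) (M : ℝ) : Prop :=
  ∀ T > 0, ∃ δ₀ > 0, ∀ t : ℝ, 0 < t → t ≤ T → ∀ δ : ℝ, 0 < δ → δ ≤ δ₀ →
    0 ≤ f (δ * t) ∧ f (δ * t) ≤ M * δ ^ 3 * f t

/-!
The strong minimum principle makes `u` vanish identically near `z`. Condition (6.1) with `t = 1`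
gives `f(s) ≤ K s³` for small `s ≥ 0`, where `K = M f(1)`. If `u y > 0` at some `y` close to `z`,
consider the Gaussian `φ(x) = ε exp(-α|x - y|²)` with `0 < ε < u y`, lowered by a constant until it
touches `u` from below in a ball around `y` containing `z`. As `u z = 0`, it does have to be
lowered, so `u < φ` at the contact point, which is therefore bounded away from `y` because
`u > ε ≥ φ` near `y`. There `Δ∞φ > K φ³` once `α` is large, whereas `u` being a supersolution forces
`Δ∞φ ≤ f(u) ≤ K u³ ≤ K φ³`.
-/

open scoped Topology Gradient

theorem exists_isLocalMin_mem_interior {X β : Type*} [TopologicalSpace X] [LinearOrder β]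
    {s : Set X} (hs : IsCompact s) {g : X → β} (hg : LowerSemicontinuousOn g s) {z : X}
    (hz : z ∈ s) (hlt : ∀ x ∈ s \ interior s, g z < g x) :
    ∃ x ∈ interior s, IsLocalMin g x ∧ g x ≤ g z := by
  obtain ⟨x, hxs, hmin⟩ := hg.exists_isMinOn ⟨z, hz⟩ hs
  have hxz : g x ≤ g z := isMinOn_iff.1 hmin z hz
  have hxi : x ∈ interior s := by
    by_contra hx
    exact (hlt x ⟨hxs, hx⟩).not_ge hxz
  exact ⟨x, hxi, hmin.isLocalMin (mem_interior_iff_mem_nhds.1 hxi), hxz⟩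

theorem exists_ball_le_mul_dist_rpow_of_eventually_nonpos {X : Type*} [PseudoMetricSpace X]
    {Ω : Set X} {u : X → ℝ} {z : X} (hΩ : Ω ∈ 𝓝 z) (hu : ∀ᶠ x in 𝓝 z, u x ≤ 0) (m : ℝ) :
    ∃ C > (0 : ℝ), ∃ ρ > (0 : ℝ), ball z ρ ⊆ Ω ∧ ∀ x ∈ ball z ρ, u x ≤ C * dist x z ^ m := by
  obtain ⟨ρ, hρ, hball⟩ := Metric.eventually_nhds_iff_ball.1 (hu.and hΩ)
  exact ⟨1, one_pos, ρ, hρ, fun x hx => (hball x hx).2,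
    fun x hx => (hball x hx).1.trans (by positivity)⟩

section InfinityLaplacian

variable {n : ℕ} {φ : EuclideanSpace ℝ (Fin n) → ℝ} {x y : EuclideanSpace ℝ (Fin n)}

theorem infLap_sub_const (φ : EuclideanSpace ℝ (Fin n) → ℝ) (c : ℝ)
    (x : EuclideanSpace ℝ (Fin n)) : infLap (fun y => φ y - c) x = infLap φ x := by
  simp only [infLap, fderiv_sub_const]

theorem infLap_eq_fderiv_fderiv_gradient (hφ : DifferentiableAt ℝ (fderiv ℝ φ) x) :
    infLap φ x = fderiv ℝ (fderiv ℝ φ) x (∇ φ x) (∇ φ x) := by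
  have hgrad : ∇ φ x =
      ∑ i, fderiv ℝ φ x (EuclideanSpace.single i 1) • EuclideanSpace.single i (1 : ℝ) := by
    simpa [inner_gradient_right] using ((EuclideanSpace.basisFun (Fin n) ℝ).sum_repr' (∇ φ x)).symm
  have hhess (v w : EuclideanSpace ℝ (Fin n)) :
      fderiv ℝ (fun y => fderiv ℝ φ y v) x w = fderiv ℝ (fderiv ℝ φ) x w v := by
    simp [fderiv_clm_apply hφ (differentiableAt_const v)]
  rw [hgrad]
  simp only [infLap, hhess, map_sum, map_smul, FunLike.coe_sum, Finset.sum_apply,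
    FunLike.coe_smul, Pi.smul_apply, smul_eq_mul, Finset.mul_sum]
  exact Finset.sum_congr rfl fun i _ => Finset.sum_congr rfl fun j _ => by ring

theorem hasFDerivAt_comp_norm_sub_sq {E : Type*} [NormedAddCommGroup E] [InnerProductSpace ℝ E]
    {g : ℝ → ℝ} {g' : ℝ} {x y : E} (hg : HasDerivAt g g' (‖x - y‖ ^ 2)) :
    HasFDerivAt (fun x => g (‖x - y‖ ^ 2)) ((2 * g') • innerSL ℝ (x - y)) x := by
  have hsq : HasFDerivAt (fun x => ‖x - y‖ ^ 2) (2 • innerSL ℝ (x - y)) x := by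
    simpa using ((hasFDerivAt_id x).sub_const y).norm_sq
  refine (hg.comp_hasFDerivAt x hsq).congr_fderiv ?_
  ext v
  simp only [smul_apply, coe_innerSL_apply, nsmul_eq_mul, Nat.cast_ofNat, smul_eq_mul]
  ring

theorem infLap_comp_norm_sub_sq {g g' : ℝ → ℝ} {g'' : ℝ} (hg : ∀ t, HasDerivAt g (g' t) t)
    (hg' : HasDerivAt g' g'' (‖x - y‖ ^ 2)) :
    infLap (fun x => g (‖x - y‖ ^ 2)) x =
      16 * g' (‖x - y‖ ^ 2) ^ 2 * g'' * (‖x - y‖ ^ 2) ^ 2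
        + 8 * g' (‖x - y‖ ^ 2) ^ 3 * ‖x - y‖ ^ 2 := by
  have hfderiv : fderiv ℝ (fun x => g (‖x - y‖ ^ 2)) =
      fun x => (2 * g' (‖x - y‖ ^ 2)) • innerSL ℝ (x - y) :=
    funext fun x => (hasFDerivAt_comp_norm_sub_sq (hg _)).fderiv
  have hgrad : ∇ (fun x => g (‖x - y‖ ^ 2)) x = (2 * g' (‖x - y‖ ^ 2)) • (x - y) := by
    refine ext_inner_right ℝ fun v => ?_
    rw [inner_gradient_left, hfderiv, real_inner_smul_left]
    rfl
  have hlin : HasFDerivAt (fun x => innerSL ℝ (x - y)) (innerSL ℝ) x :=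
    (innerSL ℝ).hasFDerivAt.comp x ((hasFDerivAt_id x).sub_const y)
  have hhess := (((hasFDerivAt_comp_norm_sub_sq hg').const_mul 2).smul hlin).congr_of_eventuallyEq
    (.of_eq hfderiv)
  have hhess_apply (v w : EuclideanSpace ℝ (Fin n)) :
      fderiv ℝ (fderiv ℝ fun x => g (‖x - y‖ ^ 2)) x v w =
        2 * g' (‖x - y‖ ^ 2) * inner ℝ v w
          + 2 * (2 * g'' * inner ℝ (x - y) v) * inner ℝ (x - y) w := by
    rw [hhess.fderiv]
    rfl
  rw [infLap_eq_fderiv_fderiv_gradient hhess.differentiableAt, hhess_apply, hgrad,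
    real_inner_smul_left, real_inner_smul_right, real_inner_self_eq_norm_sq]
  ring

end InfinityLaplacian

/-- The Gaussian `x ↦ ε exp(-α|x - y|²)` centred at `y`, used as a barrier in the strong minimum
principle. -/
noncomputable def gaussianBarrier {E : Type*} [NormedAddCommGroup E] (ε α : ℝ) (y x : E) : ℝ :=
  ε * Real.exp (-α * ‖x - y‖ ^ 2)

section GaussianBarrier

variable {E : Type*} [NormedAddCommGroup E] {ε α : ℝ}

theorem gaussianBarrier_pos (hε : 0 < ε) (α : ℝ) (y x : E) :
    0 < gaussianBarrier ε α y x :=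
  mul_pos hε (Real.exp_pos _)

theorem gaussianBarrier_le (hε : 0 ≤ ε) (hα : 0 ≤ α) (y x : E) :
    gaussianBarrier ε α y x ≤ ε := by
  refine mul_le_of_le_one_right hε (Real.exp_le_one_iff.2 ?_)
  rw [neg_mul]
  exact neg_nonpos.2 (by positivity)

theorem gaussianBarrier_lt_of_dist_lt (hε : 0 < ε) (hα : 0 < α) {x y z : E}
    (h : dist z y < dist x y) :
    gaussianBarrier ε α y x < gaussianBarrier ε α y z := by
  rw [dist_eq_norm, dist_eq_norm] at h
  unfold gaussianBarrier
  simp only [neg_mul]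
  gcongr

theorem contDiff_gaussianBarrier [InnerProductSpace ℝ E] {k : WithTop ℕ∞} (ε α : ℝ) (y : E) :
    ContDiff ℝ k (gaussianBarrier ε α y) :=
  contDiff_const.mul (contDiff_const.mul ((contDiff_id.sub contDiff_const).norm_sq ℝ)).exp

variable {n : ℕ} {x y : EuclideanSpace ℝ (Fin n)} {K : ℝ}

theorem infLap_gaussianBarrier :
    infLap (gaussianBarrier ε α y) x =
      8 * α ^ 2 * (α * ‖x - y‖ ^ 2) * (2 * (α * ‖x - y‖ ^ 2) - 1) *
        gaussianBarrier ε α y x ^ 3 := by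
  have hderiv (c t : ℝ) :
      HasDerivAt (fun t => c * Real.exp (-α * t)) (c * -α * Real.exp (-α * t)) t := by
    refine (((hasDerivAt_id t).const_mul (-α)).exp.const_mul c).congr_deriv ?_
    simp only [id_eq, mul_one]
    ring
  refine (infLap_comp_norm_sub_sq (hderiv ε) (hderiv (ε * -α) _)).trans ?_
  unfold gaussianBarrier
  ring

theorem mul_cube_lt_infLap_gaussianBarrier (hε : 0 < ε) (hα : 1 ≤ α) (hK : K ≤ α)
    (hx : 1 ≤ α * ‖x - y‖ ^ 2) :
    K * gaussianBarrier ε α y x ^ 3 < infLap (gaussianBarrier ε α y) x := by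
  rw [infLap_gaussianBarrier]
  refine mul_lt_mul_of_pos_right ?_ (pow_pos (gaussianBarrier_pos hε α y x) 3)
  generalize α * ‖x - y‖ ^ 2 = w at hx ⊢
  calc K ≤ α := hK
    _ < 8 * α ^ 2 := by nlinarith
    _ ≤ 8 * α ^ 2 * (w * (2 * w - 1)) := le_mul_of_one_le_right (by positivity) (by nlinarith)
    _ = 8 * α ^ 2 * w * (2 * w - 1) := by ring

end GaussianBarrier

section Supersolution

variable {n : ℕ} {Ω : Set (EuclideanSpace ℝ (Fin n))} {u : EuclideanSpace ℝ (Fin n) → ℝ}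
  {F : EuclideanSpace ℝ (Fin n) → ℝ → ℝ} {φ : EuclideanSpace ℝ (Fin n) → ℝ}
  {y z : EuclideanSpace ℝ (Fin n)} {K R : ℝ}

theorem IsViscSupersol.infLap_le_of_isLocalMin (hsup : IsViscSupersol Ω u F)
    (hφ : ContDiff ℝ 2 φ) {x₀ : EuclideanSpace ℝ (Fin n)} (hx₀ : x₀ ∈ Ω)
    (hmin : IsLocalMin (fun x => u x - φ x) x₀) : infLap φ x₀ ≤ F x₀ (u x₀) := by
  have hmin' : IsLocalMin (fun x => u x - (φ x - (φ x₀ - u x₀))) x₀ := by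
    filter_upwards [hmin] with x hx
    linarith
  have hle := hsup _ (hφ.sub contDiff_const) x₀ hx₀ (sub_sub_cancel _ _) hmin'
  rwa [infLap_sub_const, sub_sub_cancel] at hle

theorem IsViscSupersol.exists_infLap_le (hsup : IsViscSupersol Ω u F)
    (hu : LowerSemicontinuousOn u Ω) (hφ : ContDiff ℝ 2 φ) {s : Set (EuclideanSpace ℝ (Fin n))}
    (hs : IsCompact s) (hsΩ : s ⊆ Ω) (hz : z ∈ s)
    (hlt : ∀ x ∈ s \ interior s, u z - φ z < u x - φ x) :
    ∃ x ∈ s, u x - φ x ≤ u z - φ z ∧ infLap φ x ≤ F x (u x) := by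
  have hlsc : LowerSemicontinuousOn (fun x => u x - φ x) s := by
    simp only [sub_eq_add_neg]
    exact (hu.mono hsΩ).add (hφ.continuous.neg.lowerSemicontinuous.lowerSemicontinuousOn s)
  obtain ⟨x, hx, hmin, hle⟩ := exists_isLocalMin_mem_interior hs hlsc hz hlt
  exact ⟨x, interior_subset hx, hle,
    hsup.infLap_le_of_isLocalMin hφ (hsΩ (interior_subset hx)) hmin⟩

theorem IsViscSupersol.exists_lt_gaussianBarrier (hsup : IsViscSupersol Ω u F)
    (hu : LowerSemicontinuousOn u Ω) (hu0 : ∀ x ∈ Ω, 0 ≤ u x) (hR : closedBall y R ⊆ Ω)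
    (hz : z ∈ ball y R) (huz : u z = 0) {ε α : ℝ} (hε : 0 < ε) (hα : 0 < α) :
    ∃ x ∈ Ω, u x < gaussianBarrier ε α y x ∧ infLap (gaussianBarrier ε α y) x ≤ F x (u x) := by
  have hboundary : ∀ x ∈ closedBall y R \ interior (closedBall y R),
      u z - gaussianBarrier ε α y z < u x - gaussianBarrier ε α y x := by
    rintro x ⟨hxR, hxi⟩
    have hdist : dist z y < dist x y :=
      (mem_ball.1 hz).trans_le (not_lt.1 fun hx => hxi (ball_subset_interior_closedBall hx))
    linarith [hu0 x (hR hxR), gaussianBarrier_lt_of_dist_lt hε hα hdist]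
  obtain ⟨x, hxR, hle, hinfLap⟩ := hsup.exists_infLap_le hu (contDiff_gaussianBarrier ε α y)
    (isCompact_closedBall y R) hR (ball_subset_closedBall hz) hboundary
  exact ⟨x, hR hxR, by linarith [gaussianBarrier_pos hε α y z], hinfLap⟩

theorem IsViscSupersol.pos_of_mem_ball_of_center_pos (hsup : IsViscSupersol Ω u F)
    (hu : LowerSemicontinuousOn u Ω) (hu0 : ∀ x ∈ Ω, 0 ≤ u x)
    (hF : ∀ᶠ t in 𝓝[≥] (0 : ℝ), ∀ x ∈ Ω, F x t ≤ K * t ^ 3) (hR : closedBall y R ⊆ Ω)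
    (huy : 0 < u y) (hz : z ∈ ball y R) : 0 < u z := by
  refine (hu0 z (hR (ball_subset_closedBall hz))).lt_of_ne' fun huz => ?_
  obtain ⟨δ, ⟨hδ, hδy⟩, hFδ⟩ := (mem_nhdsGE_iff_exists_mem_Ioc_Ico_subset huy).1 hF
  obtain ⟨ε, hε, hεδ⟩ := exists_between hδ
  have hyΩ : y ∈ Ω := hR (mem_closedBall_self (pos_of_mem_ball hz).le)
  obtain ⟨s, hs, hlarge⟩ := Metric.mem_nhdsWithin_iff.1 (hu y hyΩ ε (hεδ.trans_le hδy))
  obtain ⟨α, hα1, hαK, hαs⟩ : ∃ α, 1 ≤ α ∧ |K| ≤ α ∧ (s ^ 2)⁻¹ ≤ α :=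
    ((eventually_ge_atTop _).and
      ((eventually_ge_atTop _).and (eventually_ge_atTop _))).exists
  have hα0 : 0 < α := one_pos.trans_le hα1
  obtain ⟨x, hxΩ, hux, hinfLap⟩ := hsup.exists_lt_gaussianBarrier hu hu0 hR hz huz hε hα0
  have huε : u x < ε := hux.trans_le (gaussianBarrier_le hε.le hα0.le y x)
  have hsx : s ≤ ‖x - y‖ := by
    rw [← dist_eq_norm]
    exact not_lt.1 fun hx => huε.not_gt (hlarge ⟨hx, hxΩ⟩)
  have hαx : 1 ≤ α * ‖x - y‖ ^ 2 :=
    calc 1 = (s ^ 2)⁻¹ * s ^ 2 := (inv_mul_cancel₀ (by positivity)).symm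
      _ ≤ α * ‖x - y‖ ^ 2 := by gcongr
  refine (mul_cube_lt_infLap_gaussianBarrier hε hα1 hαK hαx).not_ge ?_
  calc infLap (gaussianBarrier ε α y) x ≤ F x (u x) := hinfLap
    _ ≤ K * u x ^ 3 := hFδ ⟨hu0 x hxΩ, huε.trans hεδ⟩ x hxΩ
    _ ≤ |K| * gaussianBarrier ε α y x ^ 3 := by
      have := hu0 x hxΩ
      gcongr
      exact le_abs_self K

theorem infinite_order_zero_general (hΩ : Ω ∈ 𝓝 z) (hu : LowerSemicontinuousOn u Ω)
    (hu0 : ∀ x ∈ Ω, 0 ≤ u x) (hsup : IsViscSupersol Ω u F)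
    (hF : ∀ᶠ t in 𝓝[≥] (0 : ℝ), ∀ x ∈ Ω, F x t ≤ K * t ^ 3) (huz : u z = 0) :
    ∀ᶠ x in 𝓝 z, u x = 0 := by
  obtain ⟨r, hr, hrΩ⟩ := Metric.mem_nhds_iff.1 hΩ
  filter_upwards [ball_mem_nhds z (half_pos hr)] with y hy
  have hyΩ : closedBall y (r / 2) ⊆ Ω :=
    (closedBall_subset_ball' (by linarith [mem_ball.1 hy])).trans hrΩ
  have huy : 0 ≤ u y := hu0 y (hyΩ (mem_closedBall_self (half_pos hr).le))
  by_contra hne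
  have huz_pos : 0 < u z :=
    hsup.pos_of_mem_ball_of_center_pos hu hu0 hF hyΩ (huy.lt_of_ne' hne) (mem_ball_comm.1 hy)
  exact huz_pos.ne' huz

end Supersolution

theorem Cond61.eventually_le_mul_cube {f : ℝ → ℝ} {M : ℝ} (hf : Cond61 f M)
    (hfc : ContinuousWithinAt f (Ioi 0) 0) :
    ∀ᶠ t in 𝓝[≥] (0 : ℝ), f t ≤ M * f 1 * t ^ 3 := by
  obtain ⟨δ₀, hδ₀, hscale⟩ := hf 1 one_pos
  have hpos : ∀ᶠ t in 𝓝[>] (0 : ℝ), f t ≤ M * f 1 * t ^ 3 := by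
    filter_upwards [Ioc_mem_nhdsGT hδ₀] with t ht
    simpa [mul_right_comm] using (hscale 1 one_pos le_rfl t ht.1 ht.2).2
  have hcube : ContinuousWithinAt (fun t : ℝ => M * f 1 * t ^ 3) (Ioi 0) 0 := by fun_prop
  rw [← Ioi_insert, nhdsWithin_insert, eventually_sup]
  exact ⟨le_of_tendsto_of_tendsto hfc hcube hpos, hpos⟩

/-- Infinite-order vanishing in the borderline case (Lemma 5.1). -/
theorem infinite_order_zero {n : ℕ} (Ω : Set (EuclideanSpace ℝ (Fin n))) (hΩo : IsOpen Ω)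
    (f : ℝ → ℝ) (M : ℝ) (hM : 0 < M)
    (hfc : ContinuousOn f (Ici 0)) (hf : Cond61 f M)
    (u : EuclideanSpace ℝ (Fin n) → ℝ)
    (huc : ContinuousOn u Ω) (hu0 : ∀ x ∈ Ω, 0 ≤ u x)
    (hub : ∃ B, ∀ x ∈ Ω, u x ≤ B)
    (hsol : IsViscSol Ω u (fun _ t => f t))
    (z : EuclideanSpace ℝ (Fin n)) (hz : z ∈ Ω) (huz : u z = 0) :
    ∀ m : ℝ, 0 < m → ∃ C > (0 : ℝ), ∃ ρ > (0 : ℝ), ball z ρ ⊆ Ω ∧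
      ∀ x ∈ ball z ρ, u x ≤ C * dist x z ^ m := by
  have hcubic := hf.eventually_le_mul_cube ((hfc 0 self_mem_Ici).mono Ioi_subset_Ici_self)
  have hzero := infinite_order_zero_general (hΩo.mem_nhds hz) huc.lowerSemicontinuousOn hu0 hsol.1
    (hcubic.mono fun _ ht _ _ => ht) huz
  exact fun m _ => exists_ball_le_mul_dist_rpow_of_eventually_nonpos (hΩo.mem_nhds hz)
    (hzero.mono fun _ => le_of_eq) m
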